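/- Let −1/2 ≤ α ≤ 0 and, for z₀ ∈ (−1,1), define b(z₀) = z₀(2+α−αz₀²)/(1+α+z₀²−αz₀²). Then b is strictly increasing on (−1,1) (indeed b'(z₀) > 0 for all z₀ ∈ (−1,1)), and −1 < b(z₀) < 1 for all z₀ ∈ (−1,1). -/

import Mathlib

/-!
The derivative of `b` factors as
`b'(z) = (1 - z²) ((2 + α) (1 + α) (1 - z²) + 2 (1 + 2α) z²) / (1 + α + z² - αz²)²`,
which is visibly positive on `(-1, 1)` as soon as `1 + 2α ≥ 0`. The bounds come from the double root
of `1 - b` at `1`, namely `1 - b(z) = (1 - z)² (1 + α (1 + z)) / (1 + α + z² - αz²)`, and from the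
oddness of `b`.
-/

open Set

section

variable {α z : ℝ}

/-- The denominator of the function `b` of parameter `α`. -/
def bDenom (α z : ℝ) : ℝ :=
  1 + α + z ^ 2 - α * z ^ 2

/-- The function `b` with its parameter `α` explicit. It is meaningful where `bDenom α` does not
vanish, and takes the value `0` elsewhere. -/
noncomputable def bFun (α z : ℝ) : ℝ :=
  z * (2 + α - α * z ^ 2) / bDenom α z

theorem one_sub_sq_pos_of_mem_Ioo (hz : z ∈ Ioo (-1 : ℝ) 1) : 0 < 1 - z ^ 2 :=
  sub_pos.2 ((sq_lt_one_iff_abs_lt_one z).2 (abs_lt.2 hz))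

theorem bDenom_pos (hα : -1 < α) (hz : z ∈ Ioo (-1 : ℝ) 1) : 0 < bDenom α z := by
  have hconvex : bDenom α z = (1 + α) * (1 - z ^ 2) + 2 * z ^ 2 := by
    unfold bDenom
    ring
  have hα' : 0 < 1 + α := by linarith
  have hz' := one_sub_sq_pos_of_mem_Ioo hz
  rw [hconvex]
  positivity

theorem bFun_neg (α z : ℝ) : bFun α (-z) = -bFun α z := by
  simp only [bFun, bDenom, neg_sq, neg_mul, neg_div]

theorem one_sub_bFun (h : bDenom α z ≠ 0) :
    1 - bFun α z = (1 - z) ^ 2 * (1 + α * (1 + z)) / bDenom α z := by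
  rw [bFun, one_sub_div h, bDenom]
  ring

theorem bFun_lt_one (hα : -(1 / 2) ≤ α) (hz : z ∈ Ioo (-1 : ℝ) 1) : bFun α z < 1 := by
  have hD : 0 < bDenom α z := bDenom_pos (by linarith) hz
  have hsub : 0 < 1 - z := sub_pos.2 hz.2
  have hadd : 0 < 1 + z := by linarith [hz.1]
  have hfactor : 0 < 1 + α * (1 + z) := by
    linarith [mul_le_mul_of_nonneg_right hα hadd.le]
  rw [← sub_pos, one_sub_bFun hD.ne']
  positivity

theorem neg_one_lt_bFun (hα : -(1 / 2) ≤ α) (hz : z ∈ Ioo (-1 : ℝ) 1) : -1 < bFun α z := by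
  have h : bFun α (-z) < 1 := bFun_lt_one hα ⟨neg_lt_neg hz.2, neg_lt.1 hz.1⟩
  rw [bFun_neg] at h
  exact neg_lt.1 h

theorem hasDerivAt_bDenom (α z : ℝ) : HasDerivAt (bDenom α) (2 * (1 - α) * z) z := by
  have hsq : HasDerivAt (fun x : ℝ => x ^ 2) (2 * z) z := by simpa using hasDerivAt_pow 2 z
  exact ((hsq.const_add (1 + α)).sub (hsq.const_mul α)).congr_deriv (by ring)

theorem hasDerivAt_bFun (h : bDenom α z ≠ 0) :
    HasDerivAt (bFun α)
      ((1 - z ^ 2) * ((2 + α) * (1 + α) * (1 - z ^ 2) + 2 * (1 + 2 * α) * z ^ 2)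
        / bDenom α z ^ 2) z := by
  have hsq : HasDerivAt (fun x : ℝ => x ^ 2) (2 * z) z := by simpa using hasDerivAt_pow 2 z
  have hnum : HasDerivAt (fun x : ℝ => x * (2 + α - α * x ^ 2)) (2 + α - 3 * α * z ^ 2) z :=
    ((hasDerivAt_id' z).mul ((hsq.const_mul α).const_sub (2 + α))).congr_deriv (by ring)
  refine (hnum.fun_div (hasDerivAt_bDenom α z) h).congr_deriv ?_
  congr 1
  unfold bDenom
  ring

theorem deriv_bFun_pos (hα : -(1 / 2) ≤ α) (hz : z ∈ Ioo (-1 : ℝ) 1) : 0 < deriv (bFun α) z := by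
  have hD : 0 < bDenom α z := bDenom_pos (by linarith) hz
  have hz' := one_sub_sq_pos_of_mem_Ioo hz
  have h₁ : 0 < 1 + α := by linarith
  have h₂ : 0 < 2 + α := by linarith
  have h₃ : 0 ≤ 1 + 2 * α := by linarith
  rw [(hasDerivAt_bFun hD.ne').deriv]
  positivity

theorem strictMonoOn_bFun (hα : -(1 / 2) ≤ α) : StrictMonoOn (bFun α) (Ioo (-1) 1) := by
  refine strictMonoOn_of_deriv_pos (convex_Ioo _ _) (fun z hz => ?_) fun z hz => ?_
  · have hD : 0 < bDenom α z := bDenom_pos (by linarith) hz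
    exact (hasDerivAt_bFun hD.ne').continuousAt.continuousWithinAt
  · exact deriv_bFun_pos hα (interior_subset hz)

end

theorem b_strict_mono_general (α : ℝ) (hα : -(1 / 2) ≤ α) (b : ℝ → ℝ)
    (hb : b = fun z₀ => z₀ * (2 + α - α * z₀ ^ 2) / (1 + α + z₀ ^ 2 - α * z₀ ^ 2)) :
    (∀ z₀ ∈ Ioo (-1 : ℝ) 1, 0 < deriv b z₀) ∧
    StrictMonoOn b (Ioo (-1 : ℝ) 1) ∧
    (∀ z₀ ∈ Ioo (-1 : ℝ) 1, -1 < b z₀ ∧ b z₀ < 1) := by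
  obtain rfl : b = bFun α := hb
  exact ⟨fun _ => deriv_bFun_pos hα, strictMonoOn_bFun hα,
    fun _ hz => ⟨neg_one_lt_bFun hα hz, bFun_lt_one hα hz⟩⟩

/-- For `−1/2 ≤ α ≤ 0`, the function `b(z₀) = z₀(2+α−αz₀²)/(1+α+z₀²−αz₀²)` has positive
derivative on `(−1,1)`, is strictly increasing there, and maps `(−1,1)` into `(−1,1)`. -/
theorem b_strict_mono (α : ℝ) (hα₁ : -(1/2) ≤ α) (hα₂ : α ≤ 0)
    (b : ℝ → ℝ)
    (hb : b = fun z₀ => z₀ * (2 + α - α * z₀ ^ 2) / (1 + α + z₀ ^ 2 - α * z₀ ^ 2)) :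
    (∀ z₀ ∈ Set.Ioo (-1 : ℝ) 1, 0 < deriv b z₀) ∧
    StrictMonoOn b (Set.Ioo (-1 : ℝ) 1) ∧
    (∀ z₀ ∈ Set.Ioo (-1 : ℝ) 1, -1 < b z₀ ∧ b z₀ < 1) :=
  b_strict_mono_general α hα₁ b hb
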